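/- Let n ≥ 2. The group UVP_n admits the following presentation: the homomorphism from the presented group with generators x_{k,l} (for 1 ≤ k ≠ l ≤ n) and defining relations x_{i,j}x_{k,l} = x_{k,l}x_{i,j} for all index pairs with {i,j} ≠ {k,l}, to UVB_n, sending x_{k,l} to λ_{k,l}, is injective and its image is exactly UVP_n. -/

import Mathlib

/-!  Common setup: the unrestricted virtual braid group `UVB n`, its generators
σ_k, ρ_k (1-based indices), the elements λ_{i,j} and B_{i,j}, the permutation
homomorphism ι (characterized by `IsIota`), the section s : S_n → UVB n
(characterized by `IsPermSection`), and fused Markov equivalence. -/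

/-- Generators of the unrestricted virtual braid group `UVB n`:
`Sum.inl i` is the classical generator σ_{i+1} and `Sum.inr i` is the virtual
generator ρ_{i+1}, for `i : Fin (n-1)` (so the 1-based indices are `1, …, n-1`). -/
abbrev UVBGen (n : ℕ) := Sum (Fin (n - 1)) (Fin (n - 1))

namespace UVBGen
def sg {n : ℕ} (i : Fin (n - 1)) : FreeGroup (UVBGen n) := FreeGroup.of (Sum.inl i)
def rg {n : ℕ} (i : Fin (n - 1)) : FreeGroup (UVBGen n) := FreeGroup.of (Sum.inr i)
end UVBGen

open UVBGen in
/-- The defining relations of the unrestricted virtual braid group. -/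
def uvbRels (n : ℕ) : Set (FreeGroup (UVBGen n)) :=
  {r | (∃ i j : Fin (n - 1), (j : ℕ) = (i : ℕ) + 1 ∧
          (r = sg i * sg j * sg i * (sg j * sg i * sg j)⁻¹ ∨
           r = rg i * rg j * rg i * (rg j * rg i * rg j)⁻¹ ∨
           r = rg i * rg j * sg i * (sg j * rg i * rg j)⁻¹ ∨
           r = rg i * sg j * sg i * (sg j * sg i * rg j)⁻¹ ∨
           r = rg j * sg i * sg j * (sg i * sg j * rg i)⁻¹)) ∨
       (∃ i j : Fin (n - 1), ((i : ℕ) + 2 ≤ (j : ℕ) ∨ (j : ℕ) + 2 ≤ (i : ℕ)) ∧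
          (r = sg i * sg j * (sg j * sg i)⁻¹ ∨
           r = rg i * rg j * (rg j * rg i)⁻¹ ∨
           r = sg i * rg j * (rg j * sg i)⁻¹)) ∨
       (∃ i : Fin (n - 1), r = rg i * rg i)}

/-- The unrestricted virtual braid group on `n` strands. -/
abbrev UVB (n : ℕ) := PresentedGroup (uvbRels n)

namespace UVB

/-- The generator σ_k (1-based index; meaningful for `1 ≤ k ≤ n-1`, junk value `1` otherwise). -/
def sigma (n k : ℕ) : UVB n :=
  if h : 1 ≤ k ∧ k ≤ n - 1 then PresentedGroup.of (Sum.inl ⟨k - 1, by omega⟩) else 1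

/-- The generator ρ_k (1-based index; meaningful for `1 ≤ k ≤ n-1`, junk value `1` otherwise). -/
def rho (n k : ℕ) : UVB n :=
  if h : 1 ≤ k ∧ k ≤ n - 1 then PresentedGroup.of (Sum.inr ⟨k - 1, by omega⟩) else 1

/-- The element λ_{i,j} of `UVB n` (1-based indices `1 ≤ i ≠ j ≤ n`; junk value `1` if `i = j`).
For `i < j`:  `λ_{i,j} = ρ_{j-1}⋯ρ_{i+1} · ρ_i σ_i⁻¹ · ρ_{i+1}⋯ρ_{j-1}` and
`λ_{j,i} = ρ_{j-1}⋯ρ_{i+1} · σ_i⁻¹ ρ_i · ρ_{i+1}⋯ρ_{j-1}`. -/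
def lam (n i j : ℕ) : UVB n :=
  if i < j then
    (((List.range' (i + 1) (j - 1 - i)).reverse.map (rho n)).prod) *
      (rho n i * (sigma n i)⁻¹) *
      (((List.range' (i + 1) (j - 1 - i)).map (rho n)).prod)
  else if j < i then
    (((List.range' (j + 1) (i - 1 - j)).reverse.map (rho n)).prod) *
      ((sigma n j)⁻¹ * rho n j) *
      (((List.range' (j + 1) (i - 1 - j)).map (rho n)).prod)
  else 1

/-- The element `B_{i,j} = ρ_{j-1}ρ_{j-2}⋯ρ_{i+1}ρ_i` for `i < j`, and `1` otherwise. -/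
def B (n i j : ℕ) : UVB n :=
  if i < j then ((List.range' i (j - i)).reverse.map (rho n)).prod else 1

/-- The subgroup `U_j` of `UVB n` generated by `{λ_{i,j}, λ_{j,i} : 1 ≤ i < j}`. -/
def U (n j : ℕ) : Subgroup (UVB n) :=
  Subgroup.closure {x | ∃ i, 1 ≤ i ∧ i < j ∧ (x = lam n i j ∨ x = lam n j i)}

end UVB

/-- `ι : UVB n →* S_n` is the homomorphism sending σ_k and ρ_k to the
transposition (k, k+1) (written 0-based on `Fin n`). -/
def IsIota (n : ℕ) (ι : UVB n →* Equiv.Perm (Fin n)) : Prop :=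
  ∀ (k : ℕ) (h1 : 1 ≤ k) (h2 : k ≤ n - 1),
    ι (UVB.sigma n k) = Equiv.swap ⟨k - 1, by omega⟩ ⟨k, by omega⟩ ∧
    ι (UVB.rho n k) = Equiv.swap ⟨k - 1, by omega⟩ ⟨k, by omega⟩

/-- `s : S_n →* UVB n` is the homomorphism sending the transposition (k, k+1) to ρ_k. -/
def IsPermSection (n : ℕ) (s : Equiv.Perm (Fin n) →* UVB n) : Prop :=
  ∀ (k : ℕ) (h1 : 1 ≤ k) (h2 : k ≤ n - 1),
    s (Equiv.swap ⟨k - 1, by omega⟩ ⟨k, by omega⟩) = UVB.rho n k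

/-- The number of orbits of a permutation of `Fin n`
(= number of fixed points + number of nontrivial cycles). -/
def numOrbits {n : ℕ} (π : Equiv.Perm (Fin n)) : ℕ :=
  (Finset.univ.filter fun x => π x = x).card + π.cycleType.card

namespace UVB

private def embedGen (n : ℕ) : UVBGen n → UVBGen (n + 1)
  | Sum.inl i => Sum.inl ⟨i.val, by have := i.isLt; omega⟩
  | Sum.inr i => Sum.inr ⟨i.val, by have := i.isLt; omega⟩

open UVBGen in
/-- The natural inclusion `UVB n →* UVB (n+1)` (σ_k ↦ σ_k, ρ_k ↦ ρ_k). -/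
def incl (n : ℕ) : UVB n →* UVB (n + 1) :=
  PresentedGroup.toGroup (f := fun x => PresentedGroup.of (embedGen n x)) (by
    have key : (FreeGroup.lift fun x => (PresentedGroup.of (embedGen n x) : UVB (n + 1)))
        = (PresentedGroup.mk (uvbRels (n + 1))).comp (FreeGroup.map (embedGen n)) := by
      ext x
      simp [PresentedGroup.of]
    intro r hr
    rw [key]
    simp only [MonoidHom.comp_apply]
    have hmem : FreeGroup.map (embedGen n) r ∈ uvbRels (n + 1) := by
      have hsg : ∀ i : Fin (n - 1), FreeGroup.map (embedGen n) (sg i)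
          = sg (⟨i.val, by have := i.isLt; omega⟩ : Fin (n + 1 - 1)) := by
        intro i; simp [sg, embedGen]
      have hrg : ∀ i : Fin (n - 1), FreeGroup.map (embedGen n) (rg i)
          = rg (⟨i.val, by have := i.isLt; omega⟩ : Fin (n + 1 - 1)) := by
        intro i; simp [rg, embedGen]
      rcases hr with ⟨i, j, hij, hc⟩ | ⟨i, j, hij, hc⟩ | ⟨i, hc⟩
      · refine Or.inl ⟨⟨i.val, by have := i.isLt; omega⟩, ⟨j.val, by have := j.isLt; omega⟩,
          by simpa using hij, ?_⟩
        rcases hc with h | h | h | h | h <;> subst h <;>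
          simp only [map_mul, map_inv, hsg, hrg] <;> tauto
      · refine Or.inr (Or.inl ⟨⟨i.val, by have := i.isLt; omega⟩, ⟨j.val, by have := j.isLt; omega⟩,
          by simpa using hij, ?_⟩)
        rcases hc with h | h | h <;> subst h <;>
          simp only [map_mul, map_inv, hsg, hrg] <;> tauto
      · refine Or.inr (Or.inr ⟨⟨i.val, by have := i.isLt; omega⟩, ?_⟩)
        subst hc
        simp only [map_mul, hsg, hrg]
    exact (QuotientGroup.eq_one_iff _).mpr (Subgroup.subset_normalClosure hmem))

end UVB

/-- The elementary fused Markov moves on the disjoint union of the groups `UVB n`: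
conjugation, and the three right stabilizations (positive, negative, virtual). -/
inductive MarkovBase : (Σ n, UVB n) → (Σ n, UVB n) → Prop
  | conj (n : ℕ) (α γ : UVB n) : MarkovBase ⟨n, α⟩ ⟨n, γ * α * γ⁻¹⟩
  | stabPos (n : ℕ) (α : UVB n) :
      MarkovBase ⟨n, α⟩ ⟨n + 1, UVB.incl n α * UVB.sigma (n + 1) n⟩
  | stabNeg (n : ℕ) (α : UVB n) :
      MarkovBase ⟨n, α⟩ ⟨n + 1, UVB.incl n α * (UVB.sigma (n + 1) n)⁻¹⟩
  | stabVirt (n : ℕ) (α : UVB n) :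
      MarkovBase ⟨n, α⟩ ⟨n + 1, UVB.incl n α * UVB.rho (n + 1) n⟩

/-- Fused Markov equivalence: the smallest equivalence relation generated by the
elementary Markov moves.  By Kamada's theorem, two unrestricted virtual braids are
fused Markov equivalent iff their closures are equivalent fused links. -/
def Markov : (Σ n, UVB n) → (Σ n, UVB n) → Prop := Relation.EqvGen MarkovBase

/-! ## Statement 0 -/

/-- Generators for the presentation of `UVP n`: a symbol x_{k,l} for each pair
`1 ≤ k ≠ l ≤ n`. -/
abbrev UVPGen (n : ℕ) :=
  {p : ℕ × ℕ // 1 ≤ p.1 ∧ p.1 ≤ n ∧ 1 ≤ p.2 ∧ p.2 ≤ n ∧ p.1 ≠ p.2}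

/-- The defining relations: x_{i,j} and x_{k,l} commute whenever {i,j} ≠ {k,l}
(as unordered pairs). -/
def uvpRels (n : ℕ) : Set (FreeGroup (UVPGen n)) :=
  {r | ∃ p q : UVPGen n,
        ¬((p.1.1 = q.1.1 ∧ p.1.2 = q.1.2) ∨ (p.1.1 = q.1.2 ∧ p.1.2 = q.1.1)) ∧
        r = FreeGroup.of p * FreeGroup.of q * (FreeGroup.of p)⁻¹ * (FreeGroup.of q)⁻¹}


namespace UVBProof

open UVB

/-! ### Relations of `UVB n` in terms of `sigma` and `rho` -/

theorem rel_eq {n : ℕ} {a b : FreeGroup (UVBGen n)} (h : a * b⁻¹ ∈ uvbRels n) :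
    PresentedGroup.mk (uvbRels n) a = PresentedGroup.mk (uvbRels n) b := by
  have h1 : PresentedGroup.mk (uvbRels n) (a * b⁻¹) = 1 :=
    (QuotientGroup.eq_one_iff _).mpr (Subgroup.subset_normalClosure h)
  rw [map_mul, map_inv] at h1
  exact mul_inv_eq_one.mp h1

theorem sigma_eq {n k : ℕ} (h : 1 ≤ k ∧ k ≤ n - 1) :
    sigma n k = PresentedGroup.mk (uvbRels n) (UVBGen.sg ⟨k - 1, by omega⟩) := by
  unfold sigma; rw [dif_pos h]; rfl

theorem rho_eq {n k : ℕ} (h : 1 ≤ k ∧ k ≤ n - 1) :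
    rho n k = PresentedGroup.mk (uvbRels n) (UVBGen.rg ⟨k - 1, by omega⟩) := by
  unfold rho; rw [dif_pos h]; rfl

theorem rho_junk {n k : ℕ} (h : ¬ (1 ≤ k ∧ k ≤ n - 1)) : rho n k = 1 := by
  unfold rho; rw [dif_neg h]

theorem sigma_junk {n k : ℕ} (h : ¬ (1 ≤ k ∧ k ≤ n - 1)) : sigma n k = 1 := by
  unfold sigma; rw [dif_neg h]

theorem rho_sq (n k : ℕ) : rho n k * rho n k = 1 := by
  by_cases h : 1 ≤ k ∧ k ≤ n - 1
  · rw [rho_eq h, ← map_mul]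
    exact (QuotientGroup.eq_one_iff _).mpr
      (Subgroup.subset_normalClosure (Or.inr (Or.inr ⟨_, rfl⟩)))
  · simp [rho_junk h]

theorem rho_inv (n k : ℕ) : (rho n k)⁻¹ = rho n k :=
  inv_eq_of_mul_eq_one_left (rho_sq n k)

theorem rho_sq_assoc (n k : ℕ) (z : UVB n) : rho n k * (rho n k * z) = z := by
  rw [← mul_assoc, rho_sq, one_mul]

theorem braid_rels (n k : ℕ) (h1 : 1 ≤ k) (h2 : k + 1 ≤ n - 1) :
    sigma n k * sigma n (k+1) * sigma n k = sigma n (k+1) * sigma n k * sigma n (k+1) ∧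
    rho n k * rho n (k+1) * rho n k = rho n (k+1) * rho n k * rho n (k+1) ∧
    rho n k * rho n (k+1) * sigma n k = sigma n (k+1) * rho n k * rho n (k+1) ∧
    rho n k * sigma n (k+1) * sigma n k = sigma n (k+1) * sigma n k * rho n (k+1) ∧
    rho n (k+1) * sigma n k * sigma n (k+1) = sigma n k * sigma n (k+1) * rho n k := by
  have ha : 1 ≤ k ∧ k ≤ n - 1 := by omega
  have hb : 1 ≤ k + 1 ∧ k + 1 ≤ n - 1 := by omega
  rw [sigma_eq ha, sigma_eq hb, rho_eq ha, rho_eq hb]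
  simp only [← map_mul]
  have hv : k + 1 - 1 = k - 1 + 1 := by omega
  refine ⟨?_, ?_, ?_, ?_, ?_⟩ <;> apply rel_eq <;> left <;>
    refine ⟨⟨k - 1, by omega⟩, ⟨k + 1 - 1, by omega⟩, hv, ?_⟩ <;> tauto

theorem far_rels (n k l : ℕ) (h : k + 2 ≤ l ∨ l + 2 ≤ k) :
    Commute (sigma n k) (sigma n l) ∧ Commute (rho n k) (rho n l) ∧
    Commute (sigma n k) (rho n l) := by
  by_cases ha : 1 ≤ k ∧ k ≤ n - 1
  swap
  · simp [sigma_junk ha, rho_junk ha]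
  by_cases hb : 1 ≤ l ∧ l ≤ n - 1
  swap
  · simp [sigma_junk hb, rho_junk hb]
  rw [sigma_eq ha, sigma_eq hb, rho_eq ha, rho_eq hb]
  simp only [Commute, SemiconjBy, ← map_mul]
  have hv : k - 1 + 2 ≤ l - 1 ∨ l - 1 + 2 ≤ k - 1 := by omega
  refine ⟨?_, ?_, ?_⟩ <;> apply rel_eq <;> right <;> left <;>
    refine ⟨⟨k - 1, by omega⟩, ⟨l - 1, by omega⟩, hv, ?_⟩ <;> tauto

/-- Braid relation, right-multiplied form. -/
theorem rho_braid (n k : ℕ) (h1 : 1 ≤ k) (h2 : k + 1 ≤ n - 1) :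
    rho n k * rho n (k+1) * rho n k = rho n (k+1) * rho n k * rho n (k+1) :=
  (braid_rels n k h1 h2).2.1

/-! ### The elements `lam` -/

theorem lam_up (n i : ℕ) : lam n i (i + 1) = rho n i * (sigma n i)⁻¹ := by
  simp [lam]

theorem lam_down (n i : ℕ) : lam n (i + 1) i = (sigma n i)⁻¹ * rho n i := by
  simp [lam]

theorem lam_self (n i : ℕ) : lam n i i = 1 := by
  simp [lam]

theorem lam_succ_up (n i j : ℕ) (h : i < j) :
    lam n i (j + 1) = rho n j * lam n i j * rho n j := by
  obtain ⟨d, rfl⟩ : ∃ d, j = i + 1 + d := ⟨j - i - 1, by omega⟩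
  have e1 : i + 1 + d + 1 - 1 - i = d + 1 := by omega
  have e2 : i + 1 + d - 1 - i = d := by omega
  simp only [lam, if_pos h, if_pos (show i < i + 1 + d + 1 by omega), e1, e2,
    List.range'_1_concat]
  simp [mul_assoc]

theorem lam_succ_down (n i j : ℕ) (h : i < j) :
    lam n (j + 1) i = rho n j * lam n j i * rho n j := by
  obtain ⟨d, rfl⟩ : ∃ d, j = i + 1 + d := ⟨j - i - 1, by omega⟩
  have e1 : i + 1 + d + 1 - 1 - i = d + 1 := by omega
  have e2 : i + 1 + d - 1 - i = d := by omega
  simp only [lam, if_pos h, if_pos (show i < i + 1 + d + 1 by omega), e1, e2,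
    List.range'_1_concat, if_neg (show ¬ i + 1 + d < i by omega),
    if_neg (show ¬ i + 1 + d + 1 < i by omega)]
  simp [mul_assoc]

/-- Conjugation rule, for an abstract family `L i j` (`i < j`). -/
theorem conj_abstract (n : ℕ) (L : ℕ → ℕ → UVB n)
    (hs : ∀ i j, i < j → L i (j + 1) = rho n j * L i j * rho n j)
    (hfar : ∀ i k, k + 2 ≤ i ∨ i + 2 ≤ k → Commute (rho n k) (L i (i + 1)))
    (hb : ∀ i, 1 ≤ i → i + 1 ≤ n - 1 →
      rho n i * (rho n (i+1) * L i (i + 1)) = L (i + 1) (i + 2) * (rho n i * rho n (i+1)))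
    (j : ℕ) : ∀ (i k : ℕ), 1 ≤ i → i < j → j ≤ n → 1 ≤ k → k ≤ n - 1 →
      ¬ (k = i ∧ j = i + 1) →
      rho n k * L i j = L (Equiv.swap k (k+1) i) (Equiv.swap k (k+1) j) * rho n k := by
  have sw : ∀ k a : ℕ, a < k ∨ k + 1 < a → Equiv.swap k (k+1) a = a := fun k a h =>
    Equiv.swap_apply_of_ne_of_ne (by omega) (by omega)
  have hs' : ∀ i j, i < j → L i (j+1) * rho n j = rho n j * L i j := by
    intro i j h; rw [hs i j h]; simp [mul_assoc, rho_sq]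
  induction j using Nat.strong_induction_on with
  | _ j ih =>
  intro i k hi hij hjn hk hkn hne
  rcases Nat.lt_or_ge j k with hkj | hkj
  · -- k > j
    rw [sw k i (by omega), sw k j (by omega)]
    rcases Nat.lt_or_ge (i+1) j with h | h
    · obtain ⟨j, rfl⟩ : ∃ j', j = j' + 1 := ⟨j - 1, by omega⟩
      have h1 := ih j (by omega) i k hi (by omega) (by omega) hk hkn (by omega)
      rw [sw k i (by omega), sw k j (by omega)] at h1
      have hc : Commute (rho n k) (rho n j) := (far_rels n k j (by omega)).2.1
      have h1 : Commute (rho n k) (L i j) := h1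
      rw [hs i j (by omega)]
      exact (hc.mul_right h1).mul_right hc
    · obtain rfl : j = i + 1 := by omega
      exact hfar i k (by omega)
  rcases Nat.eq_or_lt_of_le hkj with rfl | hkj
  · -- k = j
    rw [sw k i (by omega), Equiv.swap_apply_left, hs' i k hij]
  rcases Nat.eq_or_lt_of_le (show k ≤ j - 1 by omega) with hkj' | hkj'
  · -- k = j - 1
    obtain rfl : j = k + 1 := by omega
    rw [Equiv.swap_apply_right, sw k i (by omega), hs i k (by omega)]
    simp only [mul_assoc, rho_sq_assoc, rho_sq, mul_one]
  rcases Nat.lt_or_ge (i+1) j with h | h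
  · obtain ⟨j, rfl⟩ : ∃ j', j = j' + 1 := ⟨j - 1, by omega⟩
    rw [sw k (j+1) (by omega)]
    rcases Nat.eq_or_lt_of_le (show k + 1 ≤ j by omega) with hkj2 | hkj2
    · -- k = j - 1 for the smaller index
      obtain rfl : j = k + 1 := by omega
      rcases Nat.eq_or_lt_of_le (show i ≤ k by omega) with rfl | hik
      · rw [Equiv.swap_apply_left, hs i (i+1) (by omega), ← mul_assoc, ← mul_assoc,
          mul_assoc _ _ (L i (i+1)), hb i hi (by omega)]
        simp only [mul_assoc, rho_sq, mul_one]
      · rw [sw k i (by omega)]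
        have h1 := ih k (by omega) i (k+1) hi (by omega) (by omega) (by omega) (by omega)
          (by omega)
        rw [sw (k+1) i (by omega), sw (k+1) k (by omega)] at h1
        have hbr := rho_braid n k hk (by omega)
        rw [hs i (k+1) (by omega), hs i k (by omega)]
        calc _ = rho n k * rho n (k+1) * rho n k * L i k * (rho n k * rho n (k+1)) := by group
          _ = rho n (k+1) * rho n k * (rho n (k+1) * L i k) * (rho n k * rho n (k+1)) := by
              rw [hbr]; group
          _ = rho n (k+1) * rho n k * L i k * (rho n (k+1) * rho n k * rho n (k+1)) := by
              rw [h1]; group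
          _ = _ := by rw [← hbr]; group
    · have h1 := ih j (by omega) i k hi (by omega) (by omega) hk hkn (by omega)
      rw [sw k j (by omega)] at h1
      have hc : Commute (rho n k) (rho n j) := (far_rels n k j (by omega)).2.1
      have hlt : Equiv.swap k (k+1) i < j := by
        rw [Equiv.swap_apply_def]; split_ifs <;> omega
      rw [hs i j (by omega), hs _ j hlt]
      calc _ = rho n k * rho n j * L i j * rho n j := by group
        _ = rho n j * (rho n k * L i j) * rho n j := by rw [hc.eq]; group
        _ = rho n j * L (Equiv.swap k (k+1) i) j * (rho n k * rho n j) := by rw [h1]; group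
        _ = _ := by rw [hc.eq]; group
  · obtain rfl : j = i + 1 := by omega
    rcases Nat.eq_or_lt_of_le (show k + 1 ≤ i by omega) with hki | hki
    · obtain rfl : i = k + 1 := by omega
      rw [Equiv.swap_apply_right, sw k _ (by omega), hs k (k+1) (by omega)]
      have h1 := hb k hk (by omega)
      have h2 : L (k+1) (k+1+1) = rho n k * (rho n (k+1) * L k (k+1)) * (rho n (k+1) * rho n k) := by
        rw [h1]; simp only [mul_assoc, rho_sq_assoc, rho_sq, mul_one]
      rw [h2]; simp only [mul_assoc, rho_sq_assoc, rho_sq, mul_one]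
    · rw [sw k _ (by omega), sw k _ (by omega)]
      exact hfar i k (by omega)

theorem lam_conj (n i j k : ℕ) (hi : 1 ≤ i) (hin : i ≤ n) (hj : 1 ≤ j) (hjn : j ≤ n)
    (hk : 1 ≤ k) (hkn : k ≤ n - 1) :
    rho n k * lam n i j =
      lam n (Equiv.swap k (k+1) i) (Equiv.swap k (k+1) j) * rho n k := by
  have r3 : ∀ i, 1 ≤ i → i + 1 ≤ n - 1 → rho n i * (rho n (i+1) * (sigma n i)⁻¹) =
      (sigma n (i+1))⁻¹ * (rho n i * rho n (i+1)) := by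
    intro i h1 h2
    have := (braid_rels n i h1 h2).2.2.1
    rw [eq_inv_mul_iff_mul_eq, ← mul_assoc, ← mul_assoc, ← this]
    group
  rcases Nat.lt_trichotomy i j with h | h | h
  · by_cases hne : k = i ∧ j = i + 1
    · obtain ⟨rfl, rfl⟩ := hne
      rw [Equiv.swap_apply_left, Equiv.swap_apply_right, lam_up, lam_down]
      simp only [mul_assoc, rho_sq_assoc, rho_sq, mul_one]
    · refine conj_abstract n (lam n) (lam_succ_up n) ?_ ?_ j i k hi h hjn hk hkn hne
      · intro i k h
        rw [lam_up]
        exact (far_rels n k i h).2.1.mul_right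
          ((far_rels n i k (by omega)).2.2.symm.inv_right)
      · intro i h1 h2
        rw [lam_up, lam_up]
        calc _ = rho n i * rho n (i+1) * rho n i * (sigma n i)⁻¹ := by group
          _ = rho n (i+1) * (rho n i * (rho n (i+1) * (sigma n i)⁻¹)) := by
            rw [rho_braid n i h1 h2]; group
          _ = _ := by rw [r3 i h1 h2]; group
  · subst h; simp [lam_self]
  · by_cases hne : k = j ∧ i = j + 1
    · obtain ⟨rfl, rfl⟩ := hne
      rw [Equiv.swap_apply_left, Equiv.swap_apply_right, lam_up, lam_down]
      simp only [mul_assoc]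
    · refine conj_abstract n (fun a b => lam n b a) (lam_succ_down n) ?_ ?_ i j k hj h hin hk hkn hne
      · intro i k h
        rw [lam_down]
        exact ((far_rels n i k (by omega)).2.2.symm.inv_right).mul_right
          (far_rels n k i h).2.1
      · intro i h1 h2
        rw [lam_down, show i + 2 = i + 1 + 1 from rfl, lam_down]
        calc _ = rho n i * (rho n (i+1) * (sigma n i)⁻¹) * rho n i := by group
          _ = (sigma n (i+1))⁻¹ * (rho n i * rho n (i+1) * rho n i) := by
            rw [r3 i h1 h2]; group
          _ = _ := by rw [rho_braid n i h1 h2]; group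

/-! ### Word computations -/

section words
variable {G : Type*} [Group G] {p q a b c : G}

theorem words_aux (h1 : p * b = c * p) : p * b⁻¹ = c⁻¹ * p := by
  rw [mul_inv_eq_iff_eq_mul, mul_assoc, h1]; group

theorem words_aux' (hp : p * p = 1) (h1 : p * b = c * p) : p * c = b * p := by
  have hp' : p⁻¹ = p := inv_eq_of_mul_eq_one_left hp
  have : c = p * b * p := by rw [h1, mul_assoc, hp, mul_one]
  rw [this, ← mul_assoc, ← mul_assoc, hp, one_mul]

theorem words (hp : p * p = 1) (hq : q * q = 1)
    (h1 : p * b = c * p) (h2 : q * a = c * q) :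
    p * (b⁻¹ * q) * (a⁻¹ * p) = c⁻¹ * b⁻¹ * (p * q * p) ∧
    (b⁻¹ * q) * (a⁻¹ * p) * q = b⁻¹ * c⁻¹ * (q * p * q) ∧
    q * (a⁻¹ * p) * (b⁻¹ * q) = c⁻¹ * a⁻¹ * (q * p * q) ∧
    (a⁻¹ * p) * (b⁻¹ * q) * p = a⁻¹ * c⁻¹ * (p * q * p) ∧
    (a⁻¹ * p) * (b⁻¹ * q) * (a⁻¹ * p) = a⁻¹ * c⁻¹ * b⁻¹ * (p * q * p) ∧
    (b⁻¹ * q) * (a⁻¹ * p) * (b⁻¹ * q) = b⁻¹ * c⁻¹ * a⁻¹ * (q * p * q) ∧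
    p * q * (a⁻¹ * p) = (b⁻¹ * (p * q * p)) := by
  have e1 := words_aux h1
  have e2 := words_aux (words_aux' hp h1)
  have e3 := words_aux h2
  have e4 := words_aux (words_aux' hq h2)
  have f1 : ∀ z, p * (b⁻¹ * z) = c⁻¹ * (p * z) := fun z => by
    rw [← mul_assoc, e1, mul_assoc]
  have f2 : ∀ z, p * (c⁻¹ * z) = b⁻¹ * (p * z) := fun z => by
    rw [← mul_assoc, e2, mul_assoc]
  have f3 : ∀ z, q * (a⁻¹ * z) = c⁻¹ * (q * z) := fun z => by
    rw [← mul_assoc, e3, mul_assoc]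
  have f4 : ∀ z, q * (c⁻¹ * z) = a⁻¹ * (q * z) := fun z => by
    rw [← mul_assoc, e4, mul_assoc]
  refine ⟨?_, ?_, ?_, ?_, ?_, ?_, ?_⟩ <;> simp only [mul_assoc, f1, f2, f3, f4]

end words

theorem sigma_lam (n i : ℕ) : sigma n i = (lam n i (i+1))⁻¹ * rho n i := by
  rw [lam_up, mul_inv_rev, inv_inv, mul_assoc, rho_inv, rho_sq, mul_one]

theorem comm_base (n : ℕ) (hn : 3 ≤ n) :
    Commute (lam n 1 3) (lam n 2 3) ∧ Commute (lam n 1 3) (lam n 1 2) ∧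
    Commute (lam n 1 2) (lam n 2 3) := by
  obtain ⟨r1, r2, r3, r4, r5⟩ := braid_rels n 1 le_rfl (by omega)
  have h1 : rho n 1 * lam n 2 3 = lam n 1 3 * rho n 1 := by
    have := lam_conj n 2 3 1 (by omega) (by omega) (by omega) (by omega) (by omega) (by omega)
    simpa [Equiv.swap_apply_def] using this
  have h2 : rho n 2 * lam n 1 2 = lam n 1 3 * rho n 2 := by
    have := lam_conj n 1 2 2 (by omega) (by omega) (by omega) (by omega) (by omega) (by omega)
    simpa [Equiv.swap_apply_def] using this
  rw [sigma_lam n 1, sigma_lam n (1+1)] at *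
  norm_num at r1 r2 r4 r5
  obtain ⟨w1, w2, w3, w4, w5, w6, -⟩ := words (rho_sq n 1) (rho_sq n 2) h1 h2
  rw [w1, w2, r2, mul_right_cancel_iff] at r4
  rw [w3, w4, r2, mul_right_cancel_iff] at r5
  rw [w5, w6, r2, mul_right_cancel_iff] at r1
  have c1 : Commute (lam n 1 3) (lam n 2 3) := Commute.inv_inv_iff.mp r4
  have c2 : Commute (lam n 1 3) (lam n 1 2) := Commute.inv_inv_iff.mp r5
  refine ⟨c1, c2, Commute.inv_inv_iff.mp ?_⟩
  have r1' : (lam n 1 3)⁻¹ * ((lam n 1 2)⁻¹ * (lam n 2 3)⁻¹) =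
      (lam n 1 3)⁻¹ * ((lam n 2 3)⁻¹ * (lam n 1 2)⁻¹) := by
    rw [← mul_assoc, ← mul_assoc, r5, r4]
    exact r1
  exact mul_left_cancel r1'

theorem comm_base' (n : ℕ) : Commute (lam n 1 2) (lam n 3 4) := by
  have h : ∀ k l, k + 2 ≤ l → Commute (lam n k (k+1)) (lam n l (l+1)) := by
    intro k l h
    rw [lam_up, lam_up]
    have f1 := far_rels n k l (by omega)
    have f2 := far_rels n l k (by omega)
    exact (f1.2.1.mul_right f2.2.2.symm.inv_right).mul_left
      ((f1.2.2.mul_right f1.1.inv_right).inv_left)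
  exact h 1 3 (by omega)

/-- `lam` with 0-based `Fin` indices. -/
def lamF {n : ℕ} (a b : Fin n) : UVB n := lam n (a + 1) (b + 1)

theorem swap_val {n k : ℕ} (h1 : 1 ≤ k) (h2 : k ≤ n - 1) (hn : 2 ≤ n) (a : Fin n) :
    ((Equiv.swap (⟨k - 1, by omega⟩ : Fin n) ⟨k, by omega⟩ a : Fin n) : ℕ) + 1 =
      Equiv.swap k (k+1) ((a : ℕ) + 1) := by
  simp only [Equiv.swap_apply_def, Fin.ext_iff]
  split_ifs <;> (try dsimp only at *) <;> omega

theorem lamF_conj {n k : ℕ} (h1 : 1 ≤ k) (h2 : k ≤ n - 1) (hn : 2 ≤ n) (a b : Fin n) :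
    rho n k * lamF a b = lamF (Equiv.swap (⟨k - 1, by omega⟩ : Fin n) ⟨k, by omega⟩ a)
      (Equiv.swap (⟨k - 1, by omega⟩ : Fin n) ⟨k, by omega⟩ b) * rho n k := by
  unfold lamF
  rw [swap_val h1 h2 hn, swap_val h1 h2 hn]
  exact lam_conj n _ _ k (by omega) (by omega) (by omega) (by omega) h1 h2

theorem exists_lift {n : ℕ} (hn : 2 ≤ n) (π : Equiv.Perm (Fin n)) :
    ∃ g : UVB n, ∀ a b, g * lamF a b = lamF (π a) (π b) * g := by
  obtain ⟨m, rfl⟩ : ∃ m, n = m + 1 := ⟨n - 1, by omega⟩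
  have hπ : π ∈ Submonoid.closure (Set.range fun i : Fin m ↦ Equiv.swap i.castSucc i.succ) := by
    rw [Equiv.Perm.mclosure_swap_castSucc_succ]; trivial
  induction hπ using Submonoid.closure_induction with
  | mem x hx =>
    obtain ⟨i, rfl⟩ := hx
    exact ⟨rho (m+1) (i+1), fun a b => lamF_conj (by omega) (by omega) hn a b⟩
  | one => exact ⟨1, by simp⟩
  | mul x y _ _ hx hy =>
    obtain ⟨g, hg⟩ := hx
    obtain ⟨h, hh⟩ := hy
    refine ⟨g * h, fun a b => ?_⟩
    rw [mul_assoc, hh, ← mul_assoc, hg, mul_assoc]; rfl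

theorem exists_perm {n m : ℕ} (v w : Fin m → Fin n) (hv : Function.Injective v)
    (hw : Function.Injective w) : ∃ π : Equiv.Perm (Fin n), ∀ i, π (v i) = w i := by
  have := Equiv.Perm.isMultiplyPretransitive (Fin n) m
  obtain ⟨g, hg⟩ := MulAction.exists_smul_eq (Equiv.Perm (Fin n))
    (⟨v, hv⟩ : Fin m ↪ Fin n) ⟨w, hw⟩
  exact ⟨g, fun i => DFunLike.congr_fun hg i⟩

theorem comm_transport {n : ℕ} (hn : 2 ≤ n) (π : Equiv.Perm (Fin n)) {a b c d : Fin n}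
    (h : Commute (lamF a b) (lamF c d)) : Commute (lamF (π a) (π b)) (lamF (π c) (π d)) := by
  obtain ⟨g, hg⟩ := exists_lift hn π
  have e : ∀ a b, lamF (π a) (π b) = g * lamF a b * g⁻¹ := fun a b => by
    rw [hg]; group
  rw [e, e]
  exact (Commute.conj_iff g).mpr h

theorem comm3 {n : ℕ} {a b c : Fin n} (hab : a ≠ b) (hac : a ≠ c) (hbc : b ≠ c) :
    Commute (lamF a c) (lamF b c) ∧ Commute (lamF a c) (lamF a b) ∧
    Commute (lamF a b) (lamF b c) := by
  have hn : 3 ≤ n := by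
    have := a.2; have := b.2; have := c.2
    have : (a:ℕ) ≠ b := fun h => hab (Fin.ext h)
    have : (a:ℕ) ≠ c := fun h => hac (Fin.ext h)
    have : (b:ℕ) ≠ c := fun h => hbc (Fin.ext h)
    omega
  obtain ⟨π, hπ⟩ := exists_perm ![(⟨0, by omega⟩ : Fin n), ⟨1, by omega⟩, ⟨2, by omega⟩] ![a, b, c]
    (by intro i j; fin_cases i <;> fin_cases j <;> simp)
    (by intro i j; fin_cases i <;> fin_cases j <;> simp [hab, hac, hbc, hab.symm, hac.symm, hbc.symm])
  have h0 := hπ 0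
  have h1 := hπ 1
  have h2 := hπ 2
  simp at h0 h1 h2
  obtain ⟨c1, c2, c3⟩ := comm_base n hn
  rw [← h0, ← h1, ← h2]
  exact ⟨comm_transport (by omega) π c1, comm_transport (by omega) π c2,
    comm_transport (by omega) π c3⟩

theorem comm4 {n : ℕ} {a b c d : Fin n} (hab : a ≠ b) (hac : a ≠ c) (had : a ≠ d)
    (hbc : b ≠ c) (hbd : b ≠ d) (hcd : c ≠ d) :
    Commute (lamF a b) (lamF c d) := by
  have hn : 4 ≤ n := by
    have := a.2; have := b.2; have := c.2; have := d.2
    have : (a:ℕ) ≠ b := fun h => hab (Fin.ext h)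
    have : (a:ℕ) ≠ c := fun h => hac (Fin.ext h)
    have : (a:ℕ) ≠ d := fun h => had (Fin.ext h)
    have : (b:ℕ) ≠ c := fun h => hbc (Fin.ext h)
    have : (b:ℕ) ≠ d := fun h => hbd (Fin.ext h)
    have : (c:ℕ) ≠ d := fun h => hcd (Fin.ext h)
    omega
  obtain ⟨π, hπ⟩ := exists_perm
    ![(⟨0, by omega⟩ : Fin n), ⟨1, by omega⟩, ⟨2, by omega⟩, ⟨3, by omega⟩] ![a, b, c, d]
    (by intro i j; fin_cases i <;> fin_cases j <;> simp)
    (by intro i j; fin_cases i <;> fin_cases j <;>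
          simp [hab, hac, hbc, hab.symm, hac.symm, hbc.symm, had, hbd, hcd, had.symm,
            hbd.symm, hcd.symm])
  have h0 := hπ 0
  have h1 := hπ 1
  have h2 := hπ 2
  have h3 := hπ 3
  simp at h0 h1 h2 h3
  rw [← h0, ← h1, ← h2, ← h3]
  exact comm_transport (by omega) π (comm_base' n)

theorem comm_all {n : ℕ} {a b c d : Fin n} (hab : a ≠ b) (hcd : c ≠ d)
    (h : ¬ ((a = c ∧ b = d) ∨ (a = d ∧ b = c))) : Commute (lamF a b) (lamF c d) := by
  by_cases hac : a = c
  · subst hac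
    have hbd : b ≠ d := fun e => h (Or.inl ⟨rfl, e⟩)
    exact (comm3 hcd hab hbd.symm).2.1
  by_cases hbd : b = d
  · subst hbd
    exact (comm3 hac hab hcd).1
  by_cases had : a = d
  · subst had
    have hbc : b ≠ c := fun e => h (Or.inr ⟨rfl, e⟩)
    exact (comm3 hcd hbc.symm hab).2.2.symm
  by_cases hbc : b = c
  · subst hbc
    exact (comm3 hab had hcd).2.2
  exact comm4 hab hac had hbc hbd hcd

/-! ### The presented group and the action of the symmetric group on it -/

/-- Generators of the presented group, with 0-based `Fin` indices (`1` on the diagonal). -/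
def xF {n : ℕ} (a b : Fin n) : PresentedGroup (uvpRels n) :=
  if h : a ≠ b then PresentedGroup.of ⟨((a : ℕ) + 1, (b : ℕ) + 1),
    by
      have : (a : ℕ) ≠ b := fun e => h (Fin.ext e)
      have := a.2; have := b.2
      dsimp only
      omega⟩ else 1

theorem of_eq_xF {n : ℕ} (p : UVPGen n) :
    PresentedGroup.of p = xF (n := n)
      ⟨p.1.1 - 1, by have := p.2; omega⟩ ⟨p.1.2 - 1, by have := p.2; omega⟩ := by
  obtain ⟨⟨i, j⟩, h⟩ := p
  dsimp only at h
  unfold xF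
  rw [dif_pos (by simp only [ne_eq, Fin.mk.injEq]; omega)]
  congr 2
  ext <;> simp <;> omega

theorem xF_comm {n : ℕ} {a b c d : Fin n} (h : ¬ ((a = c ∧ b = d) ∨ (a = d ∧ b = c))) :
    Commute (xF a b) (xF c d) := by
  by_cases hab : a ≠ b
  swap
  · simp [xF, hab]
  by_cases hcd : c ≠ d
  swap
  · simp [xF, hcd]
  rw [xF, dif_pos hab, xF, dif_pos hcd, ← commutatorElement_eq_one_iff_commute, commutatorElement_def]
  refine (QuotientGroup.eq_one_iff _).mpr (Subgroup.subset_normalClosure ⟨_, _, ?_, rfl⟩)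
  simpa [Fin.ext_iff] using h

theorem liftP_exists {n : ℕ} {G : Type*} [Group G] (f : Fin n → Fin n → G)
    (hf : ∀ a b c d, a ≠ b → c ≠ d → ¬ ((a = c ∧ b = d) ∨ (a = d ∧ b = c)) →
      Commute (f a b) (f c d)) :
    ∃ F : PresentedGroup (uvpRels n) →* G, ∀ a b, a ≠ b → F (xF a b) = f a b := by
  refine ⟨PresentedGroup.toGroup (f := fun p : UVPGen n =>
    f ⟨p.1.1 - 1, by have := p.2; omega⟩ ⟨p.1.2 - 1, by have := p.2; omega⟩) ?_, ?_⟩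
  · rintro r ⟨⟨⟨i, j⟩, hp⟩, ⟨⟨k, l⟩, hq⟩, h, rfl⟩
    dsimp only at h hp hq
    simp only [map_mul, map_inv, FreeGroup.lift_apply_of]
    rw [← commutatorElement_def, commutatorElement_eq_one_iff_commute]
    apply hf <;> simp only [ne_eq, Fin.mk.injEq] <;> omega
  · intro a b hab
    rw [xF, dif_pos hab, PresentedGroup.toGroup.of]
    congr

theorem extP {n : ℕ} {G : Type*} [Group G] {F F' : PresentedGroup (uvpRels n) →* G}
    (h : ∀ a b, a ≠ b → F (xF a b) = F' (xF a b)) : F = F' := by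
  apply PresentedGroup.ext
  intro p
  rw [of_eq_xF p]
  refine h _ _ ?_
  have := p.2
  simp only [ne_eq, Fin.mk.injEq]; omega

theorem actP_exists {n : ℕ} (π : Equiv.Perm (Fin n)) :
    ∃ F : PresentedGroup (uvpRels n) →* PresentedGroup (uvpRels n),
      ∀ a b, a ≠ b → F (xF a b) = xF (π a) (π b) :=
  liftP_exists _ fun a b c d _ _ h => xF_comm (by simpa using h)

/-- The action of a permutation on the presented group, as an endomorphism. -/
noncomputable def actP {n : ℕ} (π : Equiv.Perm (Fin n)) :
    PresentedGroup (uvpRels n) →* PresentedGroup (uvpRels n) := (actP_exists π).choose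

theorem actP_xF {n : ℕ} (π : Equiv.Perm (Fin n)) (a b : Fin n) :
    actP π (xF a b) = xF (π a) (π b) := by
  by_cases h : a = b
  · simp [xF, h]
  · exact (actP_exists π).choose_spec a b h

theorem actP_mul {n : ℕ} (π τ : Equiv.Perm (Fin n)) : actP (π * τ) = (actP π).comp (actP τ) :=
  extP fun a b _ => by simp [actP_xF]

theorem actP_one {n : ℕ} : actP (1 : Equiv.Perm (Fin n)) = MonoidHom.id _ :=
  extP fun a b _ => by simp [actP_xF]

/-- The action by automorphisms. -/
noncomputable def actHom (n : ℕ) :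
    Equiv.Perm (Fin n) →* MulAut (PresentedGroup (uvpRels n)) where
  toFun π := MonoidHom.toMulEquiv (actP π) (actP π⁻¹)
    (by rw [← actP_mul, inv_mul_cancel, actP_one]) (by rw [← actP_mul, mul_inv_cancel, actP_one])
  map_one' := by ext x; simp [actP_one]
  map_mul' π τ := by ext x; simp [actP_mul]

/-- The semidirect product of the presented group by the symmetric group. -/
abbrev SD (n : ℕ) := PresentedGroup (uvpRels n) ⋊[actHom n] Equiv.Perm (Fin n)

/-- Generators of the normal factor. -/
noncomputable def X {n : ℕ} (a b : Fin n) : SD n := SemidirectProduct.inl (xF a b)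

/-- Elements of the symmetric factor. -/
noncomputable def R {n : ℕ} (π : Equiv.Perm (Fin n)) : SD n := SemidirectProduct.inr π

theorem R_X {n : ℕ} (π : Equiv.Perm (Fin n)) (a b : Fin n) :
    R π * X a b = X (π a) (π b) * R π := by
  have h := SemidirectProduct.inl_aut (φ := actHom n) π (xF a b)
  have h' : actHom n π (xF a b) = xF (π a) (π b) := actP_xF π a b
  rw [h'] at h
  unfold R X
  rw [h, map_inv]; group

theorem R_mul {n : ℕ} (π τ : Equiv.Perm (Fin n)) : R (π * τ) = R π * R τ := map_mul _ _ _

theorem R_swap_sq {n : ℕ} (a b : Fin n) : R (Equiv.swap a b) * R (Equiv.swap a b) = 1 := by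
  rw [← R_mul, Equiv.swap_mul_self]; exact map_one _

theorem X_comm {n : ℕ} {a b c d : Fin n} (h : ¬ ((a = c ∧ b = d) ∨ (a = d ∧ b = c))) :
    Commute (X a b) (X c d) := (xF_comm h).map _

theorem swap_braid {n : ℕ} {a b c : Fin n} (hab : a ≠ b) (hac : a ≠ c) (hbc : b ≠ c) :
    Equiv.swap a b * Equiv.swap b c * Equiv.swap a b =
      Equiv.swap b c * Equiv.swap a b * Equiv.swap b c := by
  have h1 := Equiv.swap_mul_swap_mul_swap hab hac
  have h2 := Equiv.swap_mul_swap_mul_swap hbc.symm hac.symm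
  rw [Equiv.swap_comm b a, Equiv.swap_comm c b, Equiv.swap_comm c a] at *
  grind

theorem swap_far {n : ℕ} {a b c d : Fin n} (hac : a ≠ c) (had : a ≠ d)
    (hbc : b ≠ c) (hbd : b ≠ d) : Commute (Equiv.swap a b) (Equiv.swap c d) := by
  rw [Commute, SemiconjBy, Equiv.swap_mul_eq_mul_swap, Equiv.swap_inv]
  simp [Equiv.swap_apply_of_ne_of_ne, hac, had, hbc, hbd]

/-- Image of the classical generator. -/
noncomputable def Sg {n : ℕ} (a b : Fin n) : SD n := (X a b)⁻¹ * R (Equiv.swap a b)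

theorem SD_braid {n : ℕ} {a b c : Fin n} (hab : a ≠ b) (hac : a ≠ c) (hbc : b ≠ c) :
    Sg a b * Sg b c * Sg a b = Sg b c * Sg a b * Sg b c ∧
    R (Equiv.swap a b) * R (Equiv.swap b c) * R (Equiv.swap a b) =
      R (Equiv.swap b c) * R (Equiv.swap a b) * R (Equiv.swap b c) ∧
    R (Equiv.swap a b) * R (Equiv.swap b c) * Sg a b =
      Sg b c * R (Equiv.swap a b) * R (Equiv.swap b c) ∧
    R (Equiv.swap a b) * Sg b c * Sg a b = Sg b c * Sg a b * R (Equiv.swap b c) ∧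
    R (Equiv.swap b c) * Sg a b * Sg b c = Sg a b * Sg b c * R (Equiv.swap a b) := by
  have br : R (Equiv.swap a b) * R (Equiv.swap b c) * R (Equiv.swap a b) =
      R (Equiv.swap b c) * R (Equiv.swap a b) * R (Equiv.swap b c) := by
    simp only [← R_mul]; rw [swap_braid hab hac hbc]
  have h1 : R (Equiv.swap a b) * X b c = X a c * R (Equiv.swap a b) := by
    rw [R_X, Equiv.swap_apply_right, Equiv.swap_apply_of_ne_of_ne hac.symm hbc.symm]
  have h2 : R (Equiv.swap b c) * X a b = X a c * R (Equiv.swap b c) := by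
    rw [R_X, Equiv.swap_apply_left, Equiv.swap_apply_of_ne_of_ne hab hac]
  obtain ⟨w1, w2, w3, w4, w5, w6, w7⟩ := words (R_swap_sq a b) (R_swap_sq b c) h1 h2
  have c1 : Commute (X a c)⁻¹ (X b c)⁻¹ := (X_comm (by tauto)).inv_inv
  have c2 : Commute (X a c)⁻¹ (X a b)⁻¹ := (X_comm (by tauto)).inv_inv
  have c3 : Commute (X a b)⁻¹ (X b c)⁻¹ := (X_comm (by tauto)).inv_inv
  unfold Sg
  refine ⟨?_, br, ?_, ?_, ?_⟩
  · rw [w5, w6, br, mul_left_inj, ← c2.eq, ← c1.eq, mul_assoc, mul_assoc, c3.eq]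
  · rw [w7, br]
    simp only [mul_assoc]
  · rw [w1, w2, br, c1.eq]
  · rw [w3, w4, br, c2.eq]

theorem SD_far {n : ℕ} {a b c d : Fin n} (hac : a ≠ c) (had : a ≠ d)
    (hbc : b ≠ c) (hbd : b ≠ d) :
    Commute (Sg a b) (Sg c d) ∧ Commute (R (Equiv.swap a b)) (R (Equiv.swap c d)) ∧
    Commute (Sg a b) (R (Equiv.swap c d)) := by
  have h1 : Commute (R (Equiv.swap a b)) (R (Equiv.swap c d)) :=
    (swap_far hac had hbc hbd).map (SemidirectProduct.inr)
  have h2 : Commute (X a b) (X c d) := X_comm (by tauto)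
  have h3 : Commute (R (Equiv.swap a b)) (X c d) := by
    have := R_X (Equiv.swap a b) c d
    rwa [Equiv.swap_apply_of_ne_of_ne hac.symm hbc.symm,
      Equiv.swap_apply_of_ne_of_ne had.symm hbd.symm] at this
  have h4 : Commute (R (Equiv.swap c d)) (X a b) := by
    have := R_X (Equiv.swap c d) a b
    rwa [Equiv.swap_apply_of_ne_of_ne hac had,
      Equiv.swap_apply_of_ne_of_ne hbc hbd] at this
  unfold Sg
  exact ⟨(h2.inv_inv.mul_right h4.symm.inv_left).mul_left (h3.inv_right.mul_right h1), h1,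
    h4.symm.inv_left.mul_left h1⟩

/-- Images of the generators of `UVB n` in the semidirect product. -/
noncomputable def psiGen (n : ℕ) : UVBGen n → SD n
  | Sum.inl i => Sg ⟨i, by omega⟩ ⟨i + 1, by omega⟩
  | Sum.inr i => R (Equiv.swap ⟨i, by omega⟩ ⟨i + 1, by omega⟩)

theorem psi_rels (n : ℕ) : ∀ r ∈ uvbRels n, FreeGroup.lift (psiGen n) r = 1 := by
  have hs : ∀ i : Fin (n - 1), FreeGroup.lift (psiGen n) (UVBGen.sg i) =
    Sg ⟨i, by omega⟩ ⟨i + 1, by omega⟩ := fun i => by simp [UVBGen.sg, psiGen]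
  have hr : ∀ i : Fin (n - 1), FreeGroup.lift (psiGen n) (UVBGen.rg i) =
    R (Equiv.swap ⟨i, by omega⟩ ⟨i + 1, by omega⟩) := fun i => by simp [UVBGen.rg, psiGen]
  rintro r (⟨i, j, hij, hc⟩ | ⟨i, j, hij, hc⟩ | ⟨i, rfl⟩)
  · obtain ⟨j, hj⟩ := j
    dsimp only at hij
    subst hij
    obtain ⟨b1, b2, b3, b4, b5⟩ := SD_braid (n := n) (a := ⟨i, by omega⟩) (b := ⟨i + 1, by omega⟩)
      (c := ⟨i + 1 + 1, by omega⟩) (by simp) (by simp; omega) (by simp)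
    rcases hc with rfl | rfl | rfl | rfl | rfl <;>
      rw [map_mul, map_inv, mul_inv_eq_one] <;> simp only [map_mul, hs, hr] <;> assumption
  · obtain ⟨f1, f2, f3⟩ := SD_far (n := n) (a := ⟨i, by omega⟩) (b := ⟨i + 1, by omega⟩)
      (c := ⟨j, by omega⟩) (d := ⟨j + 1, by omega⟩) (by simp; omega) (by simp; omega)
      (by simp; omega) (by simp; omega)
    rcases hc with rfl | rfl | rfl <;>
      rw [map_mul, map_inv, mul_inv_eq_one] <;> simp only [map_mul, hs, hr] <;> assumption
  · rw [map_mul, hr, R_swap_sq]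

/-- The homomorphism from `UVB n` to the semidirect product. -/
noncomputable def psi (n : ℕ) : UVB n →* SD n := PresentedGroup.toGroup (psi_rels n)

theorem psi_sigma {n k : ℕ} (h1 : 1 ≤ k) (h2 : k ≤ n - 1) :
    psi n (sigma n k) = Sg ⟨k - 1, by omega⟩ ⟨k, by omega⟩ := by
  unfold sigma psi
  rw [dif_pos ⟨h1, h2⟩, PresentedGroup.toGroup.of]
  simp only [psiGen]
  congr 2
  omega

theorem psi_rho {n k : ℕ} (h1 : 1 ≤ k) (h2 : k ≤ n - 1) :
    psi n (rho n k) = R (Equiv.swap ⟨k - 1, by omega⟩ ⟨k, by omega⟩) := by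
  unfold rho psi
  rw [dif_pos ⟨h1, h2⟩, PresentedGroup.toGroup.of]
  simp only [psiGen]
  congr 3
  omega

theorem R_X_R {n : ℕ} (a b c d : Fin n) : R (Equiv.swap a b) * X c d * R (Equiv.swap a b) =
    X (Equiv.swap a b c) (Equiv.swap a b d) := by
  rw [R_X, mul_assoc, R_swap_sq, mul_one]

theorem psi_lam_aux {n : ℕ} (i : ℕ) (hi : 1 ≤ i) (d : ℕ) : ∀ (h : i + 1 + d ≤ n),
    psi n (lam n i (i+1+d)) = X ⟨i - 1, by omega⟩ ⟨i + d, by omega⟩ ∧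
    psi n (lam n (i+1+d) i) = X ⟨i + d, by omega⟩ ⟨i - 1, by omega⟩ := by
  induction d with
  | zero =>
    intro h
    have hs := psi_sigma (n := n) hi (by omega)
    have hr := psi_rho (n := n) hi (by omega)
    simp only [Nat.add_zero]
    rw [lam_up, lam_down, map_mul, map_mul, map_inv, hs, hr]
    have hRi : ∀ a b : Fin n, (R (Equiv.swap a b))⁻¹ = R (Equiv.swap a b) :=
      fun a b => inv_eq_of_mul_eq_one_left (R_swap_sq a b)
    unfold Sg
    rw [mul_inv_rev, inv_inv, hRi]
    constructor
    · rw [← mul_assoc, R_swap_sq, one_mul]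
    · rw [R_X_R, Equiv.swap_apply_left, Equiv.swap_apply_right]
  | succ d ih =>
    intro h
    obtain ⟨h1, h2⟩ := ih (by omega)
    have hr := psi_rho (n := n) (k := i + 1 + d) (by omega) (by omega)
    rw [show i + 1 + (d + 1) = i + 1 + d + 1 by omega, lam_succ_up n i _ (by omega),
      lam_succ_down n i _ (by omega)]
    simp only [map_mul, h1, h2, hr, R_X_R]
    have e1 : Equiv.swap (⟨i + 1 + d - 1, by omega⟩ : Fin n) ⟨i + 1 + d, by omega⟩
        ⟨i - 1, by omega⟩ = ⟨i - 1, by omega⟩ :=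
      Equiv.swap_apply_of_ne_of_ne (by simp; omega) (by simp; omega)
    have e2 : Equiv.swap (⟨i + 1 + d - 1, by omega⟩ : Fin n) ⟨i + 1 + d, by omega⟩
        ⟨i + d, by omega⟩ = ⟨i + (d + 1), by omega⟩ := by
      have : (⟨i + d, by omega⟩ : Fin n) = ⟨i + 1 + d - 1, by omega⟩ := by
        exact Fin.ext (by dsimp only; omega)
      rw [this, Equiv.swap_apply_left]
      exact Fin.ext (by dsimp only; omega)
    rw [e1, e2]
    exact ⟨rfl, rfl⟩

theorem psi_lamF {n : ℕ} (a b : Fin n) (h : a ≠ b) : psi n (lamF a b) = X a b := by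
  have hne : (a : ℕ) ≠ b := fun e => h (Fin.ext e)
  unfold lamF
  rcases Nat.lt_or_ge (a : ℕ) b with hl | hl
  · obtain ⟨d, hd⟩ : ∃ d, (b : ℕ) = a + 1 + d := ⟨b - a - 1, by omega⟩
    have := (psi_lam_aux (n := n) (a + 1) (by omega) d (by omega)).1
    rw [show (b:ℕ) + 1 = a + 1 + 1 + d by omega, this]
    congr 1
    exact Fin.ext (by dsimp only; omega)
  · obtain ⟨d, hd⟩ : ∃ d, (a : ℕ) = b + 1 + d := ⟨a - b - 1, by omega⟩
    have := (psi_lam_aux (n := n) (b + 1) (by omega) d (by omega)).2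
    rw [show (a:ℕ) + 1 = b + 1 + 1 + d by omega, this]
    congr 1
    exact Fin.ext (by dsimp only; omega)

/-! ### The subgroup generated by the `rho`s is the symmetric group -/

/-- Subgroup generated by `rho 1, …, rho m`. -/
def H (n m : ℕ) : Subgroup (UVB n) := Subgroup.closure {g | ∃ k, 1 ≤ k ∧ k ≤ m ∧ g = rho n k}

/-- The word `ρ_m ρ_{m-1} ⋯` with `d` letters. -/
def cc (n m : ℕ) : ℕ → UVB n
  | 0 => 1
  | d + 1 => cc n m d * rho n (m - d)

theorem cc_comm (n m j d : ℕ) (h : j + d + 1 ≤ m) : Commute (cc n m d) (rho n j) := by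
  induction d with
  | zero => exact Commute.one_left _
  | succ d ih =>
    exact (ih (by omega)).mul_left (far_rels n _ _ (by omega)).2.1

theorem cc_shift (n m : ℕ) (hm : m ≤ n - 1) (j d : ℕ) (hd : d ≤ m) (hj : j ≤ m) (h : m + 1 < j + d) :
    cc n m d * rho n j = rho n (j - 1) * cc n m d := by
  induction d with
  | zero => omega
  | succ d ih =>
    rcases Nat.lt_or_ge (m + 1) (j + d) with h' | h'
    · have hc : Commute (rho n (m - d)) (rho n j) := (far_rels n _ _ (by omega)).2.1
      rw [cc, mul_assoc, hc.eq, ← mul_assoc, ih (by omega) h', mul_assoc]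
    · obtain ⟨d, rfl⟩ : ∃ d', d = d' + 1 := ⟨d - 1, by omega⟩
      obtain ⟨i, rfl⟩ : ∃ i, j = i + 1 := ⟨j - 1, by omega⟩
      have e1 : m - d = i + 1 := by omega
      have e2 : m - (d + 1) = i := by omega
      have hb := rho_braid n i (by omega) (by omega)
      have hc := cc_comm n m i d (by omega)
      simp only [cc, e1, e2, Nat.add_sub_cancel]
      calc _ = cc n m d * (rho n (i+1) * rho n i * rho n (i+1)) := by group
        _ = cc n m d * rho n i * (rho n (i+1) * rho n i) := by rw [← hb]; group
        _ = _ := by rw [hc.eq]; group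

theorem H_factor (n m : ℕ) (hm : m ≤ n - 1) (w : UVB n) (hw : w ∈ H n m) :
    ∃ w' ∈ H n (m - 1), ∃ d ≤ m, w = w' * cc n m d := by
  have step : ∀ w k, 1 ≤ k → k ≤ m → (∃ w' ∈ H n (m - 1), ∃ d ≤ m, w = w' * cc n m d) →
      ∃ w' ∈ H n (m - 1), ∃ d ≤ m, w * rho n k = w' * cc n m d := by
    rintro w k hk hkm ⟨w', hw', d, hd, rfl⟩
    have gen : ∀ l, 1 ≤ l → l ≤ m - 1 → rho n l ∈ H n (m - 1) := fun l h1 h2 =>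
      Subgroup.subset_closure ⟨l, h1, h2, rfl⟩
    rcases Nat.lt_or_ge (k + d) m with h | h
    · exact ⟨w' * rho n k, mul_mem hw' (gen k hk (by omega)), d, hd, by
        rw [mul_assoc, (cc_comm n m k d (by omega)).eq, mul_assoc]⟩
    rcases Nat.eq_or_lt_of_le h with h | h
    · refine ⟨w', hw', d + 1, by omega, ?_⟩
      rw [cc, show m - d = k by omega, mul_assoc]
    rcases Nat.eq_or_lt_of_le (show m + 1 ≤ k + d from h) with h | h
    · obtain ⟨d, rfl⟩ : ∃ d', d = d' + 1 := ⟨d - 1, by omega⟩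
      refine ⟨w', hw', d, by omega, ?_⟩
      rw [cc, show m - d = k by omega, mul_assoc, mul_assoc, rho_sq, mul_one]
    · refine ⟨w' * rho n (k - 1), mul_mem hw' (gen (k - 1) (by omega) (by omega)), d, hd, ?_⟩
      rw [mul_assoc, cc_shift n m hm k d hd hkm h, mul_assoc]
  induction hw using Subgroup.closure_induction_right with
  | one => exact ⟨1, one_mem _, 0, by omega, by simp [cc]⟩
  | mul_right x y hx hy ih =>
    obtain ⟨k, h1, h2, rfl⟩ := hy
    exact step _ k h1 h2 ih
  | mul_inv_cancel x y hx hy ih =>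
    obtain ⟨k, h1, h2, rfl⟩ := hy
    rw [rho_inv]
    exact step _ k h1 h2 ih

theorem cc_apply {n : ℕ} (ι : UVB n →* Equiv.Perm (Fin n)) (hι : IsIota n ι) (m : ℕ)
    (hm : m < n) (d : ℕ) (hd : d ≤ m) : ι (cc n m d) ⟨m - d, by omega⟩ = ⟨m, hm⟩ := by
  induction d with
  | zero => simp [cc]
  | succ d ih =>
    rw [cc, map_mul, Equiv.Perm.mul_apply, (hι (m - d) (by omega) (by omega)).2]
    have e : (⟨m - (d + 1), by omega⟩ : Fin n) = ⟨m - d - 1, by omega⟩ := by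
      exact Fin.ext (by dsimp only; omega)
    rw [e, Equiv.swap_apply_left]
    exact ih (by omega)

theorem H_fix {n : ℕ} (ι : UVB n →* Equiv.Perm (Fin n)) (hι : IsIota n ι) (m : ℕ)
    (hm : m < n) (w : UVB n) (hw : w ∈ H n (m - 1)) : ι w ⟨m, hm⟩ = ⟨m, hm⟩ := by
  have : H n (m - 1) ≤ (MulAction.stabilizer (Equiv.Perm (Fin n)) (⟨m, hm⟩ : Fin n)).comap ι := by
    refine (Subgroup.closure_le _).mpr ?_
    rintro _ ⟨k, h1, h2, rfl⟩
    simp only [SetLike.mem_coe, Subgroup.mem_comap, MulAction.mem_stabilizer_iff,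
      Equiv.Perm.smul_def]
    rw [(hι k h1 (by omega)).2]
    exact Equiv.swap_apply_of_ne_of_ne (by simp; omega) (by simp; omega)
  exact this hw

theorem H_faithful {n : ℕ} (ι : UVB n →* Equiv.Perm (Fin n)) (hι : IsIota n ι) (m : ℕ)
    (hm : m ≤ n - 1) : ∀ w ∈ H n m, ι w = 1 → w = 1 := by
  induction m with
  | zero =>
    intro w hw _
    have : H n 0 ≤ ⊥ := by
      refine (Subgroup.closure_le _).mpr ?_
      rintro _ ⟨k, h1, h2, rfl⟩
      omega
    exact Subgroup.mem_bot.mp (this hw)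
  | succ m ih =>
    intro w hw h1
    obtain ⟨w', hw', d, hd, rfl⟩ := H_factor n (m+1) hm w hw
    have hlt : m + 1 < n := by omega
    have e1 := cc_apply ι hι (m+1) hlt d hd
    have e2 := H_fix ι hι (m+1) hlt w' hw'
    have e3 : ι (w' * cc n (m+1) d) ⟨m + 1 - d, by omega⟩ = ⟨m + 1, hlt⟩ := by
      rw [map_mul, Equiv.Perm.mul_apply, e1, e2]
    rw [h1] at e3
    simp only [Equiv.Perm.one_apply, Fin.mk.injEq] at e3
    obtain rfl : d = 0 := by omega
    simp only [cc, mul_one] at h1 ⊢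
    exact ih (by omega) w' hw' h1

/-! ### Main result -/

theorem main (n : ℕ) (hn : 2 ≤ n)
    (ι : UVB n →* Equiv.Perm (Fin n)) (hι : IsIota n ι) :
    ∃ φ : PresentedGroup (uvpRels n) →* UVB n,
      (∀ p : UVPGen n, φ (PresentedGroup.of p) = UVB.lam n p.1.1 p.1.2) ∧
      Function.Injective φ ∧ φ.range = ι.ker := by
  obtain ⟨φ, hφ⟩ := liftP_exists (n := n) (fun a b => lamF a b)
    fun a b c d h1 h2 h3 => comm_all h1 h2 h3
  have hpp : (psi n).comp φ = SemidirectProduct.inl := extP fun a b hab => by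
    rw [MonoidHom.comp_apply, hφ a b hab, psi_lamF a b hab]; rfl
  have hpp' : ∀ y, psi n (φ y) = SemidirectProduct.inl y := fun y => DFunLike.congr_fun hpp y
  have hιψ : ι = (SemidirectProduct.rightHom).comp (psi n) := by
    apply PresentedGroup.ext
    rintro (i | i)
    · have e := (hι (i + 1) (by omega) (by omega)).1
      have e' := psi_sigma (n := n) (k := i + 1) (by omega) (by omega)
      have hs : sigma n (i + 1) = PresentedGroup.of (Sum.inl i) := by
        unfold sigma; rw [dif_pos (by omega)]; rfl
      rw [← hs, e, MonoidHom.comp_apply, e']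
      simp [Sg, X, R]
    · have e := (hι (i + 1) (by omega) (by omega)).2
      have e' := psi_rho (n := n) (k := i + 1) (by omega) (by omega)
      have hs : rho n (i + 1) = PresentedGroup.of (Sum.inr i) := by
        unfold rho; rw [dif_pos (by omega)]; rfl
      rw [← hs, e, MonoidHom.comp_apply, e']
      simp [R]
  have hιφ : ∀ y, ι (φ y) = 1 := fun y => by
    rw [hιψ, MonoidHom.comp_apply, hpp', SemidirectProduct.rightHom_inl]
  have hconj : ∀ k, 1 ≤ k → k ≤ n - 1 → ∀ y, ∃ y', rho n k * φ y = φ y' * rho n k := by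
    intro k h1 h2 y
    let s : Equiv.Perm (Fin n) := Equiv.swap ⟨k - 1, by omega⟩ ⟨k, by omega⟩
    have : ((MulAut.conj (rho n k)).toMonoidHom).comp φ = φ.comp (actP s) :=
      extP fun a b hab => by
        have := lamF_conj h1 h2 hn a b
        simp only [MonoidHom.comp_apply, MulEquiv.coe_toMonoidHom, MulAut.conj_apply]
        rw [actP_xF, hφ a b hab, hφ _ _ (by simpa using hab), this]
        simp [s]
    refine ⟨actP s y, ?_⟩
    have := DFunLike.congr_fun this y
    simp only [MonoidHom.comp_apply, MulEquiv.coe_toMonoidHom, MulAut.conj_apply] at this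
    rw [← this]; group
  have hlam : ∀ k, 1 ≤ k → k ≤ n - 1 → ∃ y, φ y = lam n k (k+1) := by
    intro k h1 h2
    refine ⟨xF ⟨k - 1, by omega⟩ ⟨k, by omega⟩, ?_⟩
    rw [hφ _ _ (by simp; omega)]
    simp only [lamF]
    congr 1
    omega
  have hdec : ∀ u : UVB n, ∃ y, ∃ h ∈ H n (n - 1), u = φ y * h := by
    have genH : ∀ l, 1 ≤ l → l ≤ n - 1 → rho n l ∈ H n (n - 1) := fun l h1 h2 =>
      Subgroup.subset_closure ⟨l, h1, h2, rfl⟩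
    have srho : ∀ k, 1 ≤ k → k ≤ n - 1 → ∀ u : UVB n, (∃ y, ∃ h ∈ H n (n - 1), u = φ y * h) →
        ∃ y, ∃ h ∈ H n (n - 1), rho n k * u = φ y * h := by
      rintro k h1 h2 _ ⟨y, h, hh, rfl⟩
      obtain ⟨y', hy'⟩ := hconj k h1 h2 y
      exact ⟨y', rho n k * h, mul_mem (genH k h1 h2) hh, by
        rw [← mul_assoc, hy', mul_assoc]⟩
    have sphi : ∀ z, ∀ u : UVB n, (∃ y, ∃ h ∈ H n (n - 1), u = φ y * h) →
        ∃ y, ∃ h ∈ H n (n - 1), φ z * u = φ y * h := by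
      rintro z _ ⟨y, h, hh, rfl⟩
      exact ⟨z * y, h, hh, by rw [map_mul, mul_assoc]⟩
    intro u
    have hu : u ∈ Subgroup.closure (Set.range (PresentedGroup.of (rels := uvbRels n))) := by
      rw [PresentedGroup.closure_range_of]; trivial
    have hsig : ∀ i : Fin (n - 1), (PresentedGroup.of (Sum.inl i) : UVB n) = sigma n (i + 1) := by
      intro i; unfold sigma; rw [dif_pos (by omega)]; rfl
    have hrho : ∀ i : Fin (n - 1), (PresentedGroup.of (Sum.inr i) : UVB n) = rho n (i + 1) := by
      intro i; unfold rho; rw [dif_pos (by omega)]; rfl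
    induction hu using Subgroup.closure_induction_left with
    | one => exact ⟨1, 1, one_mem _, by simp⟩
    | mul_left x hx y hy ih =>
      obtain ⟨i | i, rfl⟩ := hx
      · obtain ⟨z, hz⟩ := hlam (i + 1) (by omega) (by omega)
        rw [hsig, sigma_lam, ← hz, ← map_inv, mul_assoc]
        exact sphi _ _ (srho _ (by omega) (by omega) _ ih)
      · rw [hrho]
        exact srho _ (by omega) (by omega) _ ih
    | inv_mul_cancel x hx y hy ih =>
      obtain ⟨i | i, rfl⟩ := hx
      · obtain ⟨z, hz⟩ := hlam (i + 1) (by omega) (by omega)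
        rw [hsig, sigma_lam, ← hz, mul_inv_rev, inv_inv, rho_inv, mul_assoc]
        exact srho _ (by omega) (by omega) _ (sphi _ _ ih)
      · rw [hrho, rho_inv]
        exact srho _ (by omega) (by omega) _ ih
  refine ⟨φ, ?_, ?_, ?_⟩
  · intro p
    obtain ⟨⟨i, j⟩, h⟩ := p
    dsimp only at h
    rw [of_eq_xF, hφ _ _ (by simp only [ne_eq, Fin.mk.injEq]; omega)]
    simp only [lamF]
    congr 1 <;> omega
  · intro y z hyz
    have := congrArg (psi n) hyz
    rw [hpp', hpp'] at this
    exact SemidirectProduct.inl_injective this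
  · ext u
    constructor
    · rintro ⟨y, rfl⟩
      exact hιφ y
    · intro hu
      obtain ⟨y, h, hh, rfl⟩ := hdec u
      have hu' : ι (φ y * h) = 1 := hu
      rw [map_mul, hιφ, one_mul] at hu'
      rw [H_faithful ι hι (n - 1) le_rfl h hh hu', mul_one]
      exact ⟨y, rfl⟩

end UVBProof

/-- For `n ≥ 2`, the homomorphism from the group presented by the
generators x_{k,l} (1 ≤ k ≠ l ≤ n) and the relations "x_{i,j} commutes with x_{k,l}
whenever {i,j} ≠ {k,l}" to `UVB n`, sending x_{k,l} to λ_{k,l}, is injective with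
image exactly `UVP n = ker ι`. -/
theorem statement0 (n : ℕ) (hn : 2 ≤ n)
    (ι : UVB n →* Equiv.Perm (Fin n)) (hι : IsIota n ι) :
    ∃ φ : PresentedGroup (uvpRels n) →* UVB n,
      (∀ p : UVPGen n, φ (PresentedGroup.of p) = UVB.lam n p.1.1 p.1.2) ∧
      Function.Injective φ ∧ φ.range = ι.ker := by
  exact UVBProof.main n hn ι hι
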